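/- Define g : (1, +∞) → (0,1) by g(β) = max{ (β−2)/(β²−1), (β−1)²/(β³+β²−β) }. Let β and γ be real numbers with β > 1, γ < 0 and β + γ > 2 − g(β). Then there exist an open set U ⊆ ℂ containing the real interval [γ/β, 1] and a closed disk K ⊆ ℂ such that for every graph G and every external field vector λ with λ_v ∈ U for all v ∈ V(G): (1) for every non-isolated vertex v ∈ V(G) (a vertex incident to at least one edge), [Z_{G,v}(λ)]₀ ≠ 0, so R_{G,v}(λ) is well defined, and R_{G,v}(λ) ∈ K; and (2) the partition function Z_G(λ) is nonzero. -/

import Mathlib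

open scoped BigOperators

/-- A finite undirected multigraph (self-loops and parallel edges permitted),
with vertices `Fin n` and edges given as a multiset of (ordered representatives of)
unordered pairs of vertices.  Since the edge weight below is symmetric, the
orientation of each pair is immaterial. -/
structure MultiGraph where
  n : ℕ
  edges : Multiset (Fin n × Fin n)

/-- The edge interaction: `A₀₀ = β`, `A₀₁ = A₁₀ = 1`, `A₁₁ = γ`
(spin `false` = 0, spin `true` = 1). -/
noncomputable def edgeW (β γ : ℝ) (i j : Bool) : ℂ :=
  if i = j then (if i then (γ : ℂ) else (β : ℂ)) else 1

/-- The partition function with complex external fields `lam`. -/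
noncomputable def ZC (β γ : ℝ) (G : MultiGraph) (lam : Fin G.n → ℂ) : ℂ :=
  ∑ σ : Fin G.n → Bool,
    (G.edges.map fun e => edgeW β γ (σ e.1) (σ e.2)).prod *
      ∏ v, (if σ v then lam v else 1)

/-- `[Z_{G,v}(λ)]_i` : the partition function restricted to configurations with `σ v = i`. -/
noncomputable def ZCv (β γ : ℝ) (G : MultiGraph) (lam : Fin G.n → ℂ) (v : Fin G.n) (i : Bool) : ℂ :=
  ∑ σ : Fin G.n → Bool,
    if σ v = i then
      (G.edges.map fun e => edgeW β γ (σ e.1) (σ e.2)).prod *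
        ∏ u, (if σ u then lam u else 1)
    else 0

/-- The function `g(β) = max{(β−2)/(β²−1), (β−1)²/(β³+β²−β)}`. -/
noncomputable def gFun (β : ℝ) : ℝ :=
  max ((β - 2) / (β ^ 2 - 1)) ((β - 1) ^ 2 / (β ^ 3 + β ^ 2 - β))

/-!
When an edge is added to a graph, the ratio at one of its endpoints is obtained by a Möbius-type
operation from ratios of graphs with fewer edges: the graph without the new edge, possibly with an
endpoint pinned to spin `0` (equivalently, with its field set to `0`), and the graph in which the
two endpoints are contracted and their fields multiplied. Hence, if the fields come from a submonoid
`M` of `ℂ` containing `0` and these operations send `M` and `K` back to `K`, induction on the number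
of edges keeps every ratio in `K`, and `-1 ∉ K` makes the partition function nonzero.

For real fields in `[γ / β, 1]` and suitable `α`, `b`, the disk `K` with diameter `[-α, b]` is
mapped to its own interior, and by compactness this persists for complex fields near `[γ / β, 1]`
and for nearby `β`, `γ`. However, no neighbourhood of `1` lies in a bounded submonoid. So `β`, `γ`
are replaced by `β / s`, `γ * s` with `s > 1`, which multiplies the fields by powers of `s⁻¹` and
moves them into the interior of a submonoid that stays close to `[γ / β, 1]`.
-/

open scoped Topology

section PartitionFunction

variable {V : Type*} [Fintype V] {β γ : ℝ} {E : Multiset (V × V)} {lam : V → ℂ} {u v : V}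

/-- The weight of the configuration `σ` in the partition function of the graph with edges `E`,
for an arbitrary finite vertex type. -/
noncomputable def configWeight (β γ : ℝ) (E : Multiset (V × V)) (lam : V → ℂ) (σ : V → Bool) : ℂ :=
  (E.map fun e => edgeW β γ (σ e.1) (σ e.2)).prod * ∏ v, (if σ v then lam v else 1)

/-- The partition function restricted to the configurations in `S`. -/
noncomputable def partitionOn (β γ : ℝ) (E : Multiset (V × V)) (lam : V → ℂ)
    (S : Finset (V → Bool)) : ℂ :=
  ∑ σ ∈ S, configWeight β γ E lam σ

/-- The vertex `v` is an endpoint of some edge of `E`, i.e. `v` is not isolated. -/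
def Incident {V : Type*} (E : Multiset (V × V)) (v : V) : Prop :=
  ∃ e ∈ E, e.1 = v ∨ e.2 = v

theorem edgeW_comm (β γ : ℝ) (i j : Bool) : edgeW β γ i j = edgeW β γ j i := by
  cases i <;> cases j <;> rfl

theorem Incident.cons {V : Type*} {E : Multiset (V × V)} {v : V} (h : Incident E v) (e : V × V) :
    Incident (e ::ₘ E) v :=
  let ⟨e', he', hv⟩ := h
  ⟨e', Multiset.mem_cons_of_mem he', hv⟩

theorem partitionOn_cons {e : V × V} {S : Finset (V → Bool)} {c : ℂ}
    (hc : ∀ σ ∈ S, edgeW β γ (σ e.1) (σ e.2) = c) :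
    partitionOn β γ (e ::ₘ E) lam S = c * partitionOn β γ E lam S := by
  rw [partitionOn, partitionOn, Finset.mul_sum]
  refine Finset.sum_congr rfl fun σ hσ => ?_
  simp [configWeight, hc σ hσ, mul_assoc]

theorem partitionOn_eq_add (S : Finset (V → Bool)) (v : V) :
    partitionOn β γ E lam S = partitionOn β γ E lam {σ ∈ S | σ v = false} +
      partitionOn β γ E lam {σ ∈ S | σ v = true} := by
  simpa only [partitionOn, Bool.not_eq_false] using
    (Finset.sum_filter_add_sum_filter_not S (fun σ => σ v = false) (configWeight β γ E lam)).symm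

variable [DecidableEq V]

theorem configWeight_update_field_zero (σ : V → Bool) :
    configWeight β γ E (Function.update lam v 0) σ =
      if σ v = false then configWeight β γ E lam σ else 0 := by
  unfold configWeight
  split_ifs with h
  · congr 1
    refine Finset.prod_congr rfl fun w _ => ?_
    rcases eq_or_ne w v with rfl | hw
    · simp [h]
    · simp [hw]
  · rw [Finset.prod_eq_zero (Finset.mem_univ v) (by simp [Bool.not_eq_false _ ▸ h]), mul_zero]

/-- Pinning a vertex to spin `0` amounts to switching off its external field, so that pinned
graphs are again covered by statements about arbitrary fields. -/
theorem partitionOn_update_field_zero (S : Finset (V → Bool)) :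
    partitionOn β γ E (Function.update lam v 0) S =
      partitionOn β γ E lam {σ ∈ S | σ v = false} := by
  simp only [partitionOn, configWeight_update_field_zero, Finset.sum_filter]

theorem configWeight_update_true (hu : ¬ Incident E u) (σ : V → Bool) :
    configWeight β γ E lam (Function.update σ u true) =
      lam u * configWeight β γ E lam (Function.update σ u false) := by
  have edges_eq : (E.map fun e =>
      edgeW β γ (Function.update σ u true e.1) (Function.update σ u true e.2)) = E.map fun e =>
      edgeW β γ (Function.update σ u false e.1) (Function.update σ u false e.2) := by
    refine Multiset.map_congr rfl fun e he => ?_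
    have h1 : e.1 ≠ u := fun h => hu ⟨e, he, .inl h⟩
    have h2 : e.2 ≠ u := fun h => hu ⟨e, he, .inr h⟩
    simp [h1, h2]
  have field_eq (w : V) : (if Function.update σ u true w then lam w else 1) =
      (if Function.update σ u false w then lam w else 1) * if w = u then lam u else 1 := by
    rcases eq_or_ne w u with rfl | hw
    · simp
    · simp [hw]
  simp only [configWeight, edges_eq, field_eq, Finset.prod_mul_distrib, Finset.prod_ite_eq',
    Finset.mem_univ, if_true]
  ring

theorem partitionOn_filter_true (hu : ¬ Incident E u) {S : Finset (V → Bool)}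
    (hS : ∀ σ ∈ S, ∀ i, Function.update σ u i ∈ S) :
    partitionOn β γ E lam {σ ∈ S | σ u = true} =
      lam u * partitionOn β γ E lam {σ ∈ S | σ u = false} := by
  rw [partitionOn, partitionOn, Finset.mul_sum]
  refine Finset.sum_nbij' (Function.update · u false) (Function.update · u true) ?_ ?_ ?_ ?_ ?_
  · simp +contextual [hS]
  · simp +contextual [hS]
  · simp +contextual
  · simp +contextual
  · intro σ hσ
    rw [← configWeight_update_true hu, ← (Finset.mem_filter.1 hσ).2, Function.update_eq_self]

theorem partitionOn_empty (lam : V → ℂ) :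
    partitionOn β γ 0 lam Finset.univ = ∏ v, (1 + lam v) := by
  have expand := Fintype.prod_sum fun v (b : Bool) => if b then lam v else 1
  simpa [partitionOn, configWeight, add_comm] using expand.symm

section Contraction

/-- Redirects to `u` every edge end at `v`. The vertex `v` is kept, as an isolated vertex, so that
the vertex type does not change. -/
def contractEdges {V : Type*} [DecidableEq V] (u v : V) (E : Multiset (V × V)) :
    Multiset (V × V) :=
  E.map (Prod.map (Function.update id v u) (Function.update id v u))

theorem Incident.contractEdges_left {V : Type*} [DecidableEq V] {E : Multiset (V × V)} {u : V}
    (h : Incident E u) (v : V) : Incident (contractEdges u v E) u := by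
  obtain ⟨e, he, hu⟩ := h
  have fixes_u : Function.update id v u u = u := by by_cases h : u = v <;> simp [Function.update, h]
  exact ⟨_, Multiset.mem_map_of_mem _ he, hu.imp (by simp +contextual [fixes_u])
    (by simp +contextual [fixes_u])⟩

theorem Incident.of_contractEdges {V : Type*} [DecidableEq V] {E : Multiset (V × V)} {u v w : V}
    (h : Incident (contractEdges u v E) w) (hw : w ≠ u) : Incident E w := by
  obtain ⟨_, he', hw'⟩ := h
  obtain ⟨e, he, rfl⟩ := Multiset.mem_map.1 he'
  have eq_of_update_eq (x : V) (hx : Function.update id v u x = w) : x = w := by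
    rcases eq_or_ne x v with rfl | hxv
    · simp [hw.symm] at hx
    · simpa [hxv] using hx
  exact ⟨e, he, hw'.imp (eq_of_update_eq _) (eq_of_update_eq _)⟩

theorem configWeight_contractEdges (huv : u ≠ v) {σ : V → Bool} (hσ : σ v = false) :
    configWeight β γ (contractEdges u v E) (Function.update lam u (lam u * lam v)) σ =
      configWeight β γ E lam (Function.update σ v (σ u)) := by
  have spin_eq (w : V) : σ (Function.update id v u w) = Function.update σ v (σ u) w := by
    rcases eq_or_ne w v with rfl | hw
    · simp
    · simp [hw]
  have field_left (w : V) : (if σ w then Function.update lam u (lam u * lam v) w else 1) =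
      (if σ w then lam w else 1) * if w = u then if σ u then lam v else 1 else 1 := by
    rcases eq_or_ne w u with rfl | hw
    · cases σ w <;> simp
    · simp [hw]
  have field_right (w : V) : (if Function.update σ v (σ u) w then lam w else 1) =
      (if σ w then lam w else 1) * if w = v then if σ u then lam v else 1 else 1 := by
    rcases eq_or_ne w v with rfl | hw
    · simp [hσ]
    · simp [hw]
  simp only [configWeight, contractEdges, Multiset.map_map, Function.comp_apply, Prod.map_fst,
    Prod.map_snd, spin_eq, field_left, field_right, Finset.prod_mul_distrib, Finset.prod_ite_eq',
    Finset.mem_univ, if_true]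

theorem partitionOn_contractEdges (huv : u ≠ v) (i : Bool) :
    partitionOn β γ (contractEdges u v E) (Function.update lam u (lam u * lam v))
      {σ | σ u = i ∧ σ v = false} = partitionOn β γ E lam {σ | σ u = i ∧ σ v = i} := by
  refine Finset.sum_nbij' (fun σ => Function.update σ v (σ u)) (Function.update · v false)
    ?_ ?_ ?_ ?_ ?_
  · simp +contextual [huv]
  · simp +contextual [huv]
  · intro σ hσ
    simp [← (Finset.mem_filter.1 hσ).2.2]
  · intro σ hσ
    obtain ⟨hu, hv⟩ := (Finset.mem_filter.1 hσ).2
    simp [huv, hu, ← hv]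
  · intro σ hσ
    exact configWeight_contractEdges huv (Finset.mem_filter.1 hσ).2.2

end Contraction

section Rescaling

/-- The degree of a vertex, a self-loop counting twice. -/
def edgeDegree {V : Type*} [DecidableEq V] (E : Multiset (V × V)) (v : V) : ℕ :=
  (E.map Prod.fst).count v + (E.map Prod.snd).count v

theorem edgeDegree_eq_zero {V : Type*} [DecidableEq V] {E : Multiset (V × V)} {v : V} :
    edgeDegree E v = 0 ↔ ¬ Incident E v := by
  simp only [edgeDegree, Nat.add_eq_zero_iff, Multiset.count_eq_zero, Multiset.mem_map, Incident]
  grind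

/-- The field that plays for the edge weights `β / s`, `1`, `γ * s` the role that `lam` plays for
`β`, `1`, `γ`. -/
noncomputable def rescaledField {V : Type*} [DecidableEq V] (s : ℝ) (E : Multiset (V × V))
    (lam : V → ℂ) (v : V) : ℂ :=
  lam v * (s : ℂ)⁻¹ ^ edgeDegree E v

/-- The edge matrix with entries `β, 1, γ` is `s` times the one with entries `β / s, 1, γ * s`,
up to a factor `s⁻¹` for each end of the edge with spin `1`. -/
theorem configWeight_eq_rescaled {s : ℝ} (hs : s ≠ 0) (σ : V → Bool) :
    configWeight β γ E lam σ = (s : ℂ) ^ E.card *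
      configWeight (β / s) (γ * s) E (rescaledField s E lam) σ := by
  have hs' : (s : ℂ) ≠ 0 := mod_cast hs
  induction E using Multiset.induction with
  | empty => simp [configWeight, rescaledField, edgeDegree]
  | cons e E ih =>
    have edge_eq : edgeW β γ (σ e.1) (σ e.2) = s * edgeW (β / s) (γ * s) (σ e.1) (σ e.2) *
        ((if σ e.1 then (s : ℂ)⁻¹ else 1) * if σ e.2 then (s : ℂ)⁻¹ else 1) := by
      cases σ e.1 <;> cases σ e.2 <;> simp [edgeW] <;> field_simp
    have field_eq (w : V) : (if σ w then rescaledField s (e ::ₘ E) lam w else 1) =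
        (if σ w then rescaledField s E lam w else 1) *
          ((if w = e.1 then if σ e.1 then (s : ℂ)⁻¹ else 1 else 1) *
            if w = e.2 then if σ e.2 then (s : ℂ)⁻¹ else 1 else 1) := by
      simp only [rescaledField, edgeDegree, Multiset.map_cons, Multiset.count_cons, pow_add]
      split_ifs <;> simp_all <;> ring
    simp only [configWeight, Multiset.map_cons, Multiset.prod_cons, Multiset.card_cons, field_eq,
      Finset.prod_mul_distrib, Finset.prod_ite_eq', Finset.mem_univ, if_true, edge_eq] at ih ⊢
    linear_combination (s * edgeW (β / s) (γ * s) (σ e.1) (σ e.2) *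
        ((if σ e.1 then (s : ℂ)⁻¹ else 1) * if σ e.2 then (s : ℂ)⁻¹ else 1)) * ih

theorem partitionOn_eq_rescaled {s : ℝ} (hs : s ≠ 0) (S : Finset (V → Bool)) :
    partitionOn β γ E lam S = (s : ℂ) ^ E.card *
      partitionOn (β / s) (γ * s) E (rescaledField s E lam) S := by
  simp only [partitionOn, Finset.mul_sum, ← configWeight_eq_rescaled hs]

end Rescaling

end PartitionFunction

section Ratios

variable {V : Type*} [Fintype V] [DecidableEq V] {β γ : ℝ} {E : Multiset (V × V)} {lam : V → ℂ}
  {u v : V}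

/-- The restricted partition function `[Z_v]_i`. -/
noncomputable def partitionAt (β γ : ℝ) (E : Multiset (V × V)) (lam : V → ℂ) (v : V) (i : Bool) :
    ℂ :=
  partitionOn β γ E lam {σ | σ v = i}

/-- The restricted partition function `[Z_{u,v}]_{i,j}`. -/
noncomputable def partitionAt₂ (β γ : ℝ) (E : Multiset (V × V)) (lam : V → ℂ) (u v : V)
    (i j : Bool) : ℂ :=
  partitionOn β γ E lam {σ | σ u = i ∧ σ v = j}

/-- The ratio `[Z_v]₁ / [Z_v]₀` is well defined and lies in `K`. -/
def HasRatioIn (β γ : ℝ) (E : Multiset (V × V)) (lam : V → ℂ) (v : V) (K : Set ℂ) : Prop :=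
  partitionAt β γ E lam v false ≠ 0 ∧
    partitionAt β γ E lam v true / partitionAt β γ E lam v false ∈ K

theorem partitionOn_univ_eq_add (v : V) :
    partitionOn β γ E lam Finset.univ =
      partitionAt β γ E lam v false + partitionAt β γ E lam v true :=
  partitionOn_eq_add Finset.univ v

theorem partitionAt_eq_add (u v : V) (i : Bool) :
    partitionAt β γ E lam u i =
      partitionAt₂ β γ E lam u v i false + partitionAt₂ β γ E lam u v i true := by
  simpa only [partitionAt, partitionAt₂, Finset.filter_filter] using
    partitionOn_eq_add {σ | σ u = i} v

theorem partitionAt₂_comm (u v : V) (i j : Bool) :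
    partitionAt₂ β γ E lam u v i j = partitionAt₂ β γ E lam v u j i := by
  simp only [partitionAt₂, and_comm]

theorem partitionAt₂_cons (u v : V) (i j : Bool) :
    partitionAt₂ β γ ((u, v) ::ₘ E) lam u v i j =
      edgeW β γ i j * partitionAt₂ β γ E lam u v i j :=
  partitionOn_cons fun σ hσ => by
    obtain ⟨hu, hv⟩ := (Finset.mem_filter.1 hσ).2
    rw [hu, hv]

theorem partitionAt_cons_self (u : V) (i : Bool) :
    partitionAt β γ ((u, u) ::ₘ E) lam u i = edgeW β γ i i * partitionAt β γ E lam u i :=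
  partitionOn_cons fun σ hσ => by rw [(Finset.mem_filter.1 hσ).2]

theorem HasRatioIn.cons_comm {K : Set ℂ} {w : V} (h : HasRatioIn β γ ((u, v) ::ₘ E) lam w K) :
    HasRatioIn β γ ((v, u) ::ₘ E) lam w K := by
  simpa only [HasRatioIn, partitionAt, partitionOn, configWeight, Multiset.map_cons,
    edgeW_comm] using h

theorem HasRatioIn.partitionOn_ne_zero {K : Set ℂ} (h : HasRatioIn β γ E lam v K)
    (hK : ∀ z ∈ K, 1 + z ≠ 0) : partitionOn β γ E lam Finset.univ ≠ 0 := by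
  obtain ⟨h0, hmem⟩ := h
  rw [partitionOn_univ_eq_add v, show _ + _ = partitionAt β γ E lam v false *
    (1 + partitionAt β γ E lam v true / partitionAt β γ E lam v false) by field_simp]
  exact mul_ne_zero h0 (hK _ hmem)

theorem partitionAt_update_field_zero (u v : V) (i : Bool) :
    partitionAt β γ E (Function.update lam v 0) u i = partitionAt₂ β γ E lam u v i false := by
  simp only [partitionAt, partitionAt₂, partitionOn_update_field_zero, Finset.filter_filter]

theorem partitionAt₂_update_field_zero (u v : V) :
    partitionOn β γ E (Function.update (Function.update lam u 0) v 0) Finset.univ =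
      partitionAt₂ β γ E lam u v false false := by
  simp only [partitionAt₂, partitionOn_update_field_zero, Finset.filter_filter, and_comm]

theorem partitionAt_true_of_not_incident (hv : ¬ Incident E v) :
    partitionAt β γ E lam v true = lam v * partitionAt β γ E lam v false :=
  partitionOn_filter_true hv fun _ _ _ => Finset.mem_univ _

theorem partitionAt₂_true_of_not_incident (huv : u ≠ v) (hu : ¬ Incident E u) (j : Bool) :
    partitionAt₂ β γ E lam u v true j = lam u * partitionAt₂ β γ E lam u v false j := by
  have invariant : ∀ σ ∈ ({σ | σ v = j} : Finset (V → Bool)), ∀ i,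
      Function.update σ u i ∈ ({σ | σ v = j} : Finset (V → Bool)) := by
    simp +contextual [huv.symm]
  simpa only [partitionAt₂, Finset.filter_filter, and_comm] using
    partitionOn_filter_true (β := β) (γ := γ) (lam := lam) hu invariant

theorem partitionAt_contractEdges (huv : u ≠ v) (i : Bool) :
    partitionAt β γ (contractEdges u v E)
      (Function.update (Function.update lam u (lam u * lam v)) v 0) u i =
        partitionAt₂ β γ E lam u v i i := by
  rw [partitionAt_update_field_zero]
  exact partitionOn_contractEdges huv i

end Ratios

section Induction

/-- The ratio produced at an endpoint of an edge whose other endpoint carries the effective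
field `z`. -/
noncomputable def edgeMap (β γ : ℝ) (z : ℂ) : ℂ :=
  (1 + γ * z) / (β + z)

/-- The operations by which ratios arise when an edge is added to a graph, with fields in `M` and
ratios in `K`, are defined and take values in `O`. -/
structure EdgeMapsTo (β γ : ℝ) (M K O : Set ℂ) : Prop where
  one_add_ne_zero : ∀ w ∈ M ∪ K, 1 + w ≠ 0
  add_ne_zero : ∀ w ∈ M ∪ K, (β : ℂ) + w ≠ 0
  loop_mem : ∀ w ∈ M ∪ K, γ * w / β ∈ O
  mul_edgeMap_mem : ∀ w ∈ M ∪ K, ∀ y ∈ M, w * edgeMap β γ y ∈ O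
  field_mul_edgeMap_mem : ∀ x ∈ M, ∀ z ∈ K, x * edgeMap β γ z ∈ O
  contract_mem : ∀ z ∈ K, ∀ z' ∈ K, ∀ z'' ∈ K, (z'' + γ * z') / (β + z) ∈ O

theorem EdgeMapsTo.mono {β γ : ℝ} {M M' K O O' : Set ℂ} (h : EdgeMapsTo β γ M K O) (hM : M' ⊆ M)
    (hO : O ⊆ O') : EdgeMapsTo β γ M' K O' where
  one_add_ne_zero w hw := h.one_add_ne_zero w (Set.union_subset_union_left K hM hw)
  add_ne_zero w hw := h.add_ne_zero w (Set.union_subset_union_left K hM hw)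
  loop_mem w hw := hO (h.loop_mem w (Set.union_subset_union_left K hM hw))
  mul_edgeMap_mem w hw y hy :=
    hO (h.mul_edgeMap_mem w (Set.union_subset_union_left K hM hw) y (hM hy))
  field_mul_edgeMap_mem x hx z hz := hO (h.field_mul_edgeMap_mem x (hM hx) z hz)
  contract_mem z hz z' hz' z'' hz'' := hO (h.contract_mem z hz z' hz' z'' hz'')

/-- Here `A`, `B`, `C`, `D` stand for `[Z_{u,v}]` at the spins `00`, `10`, `01`, `11` before the
edge `{u, v}` is added, and `x`, `y` for the fields at `u` and `v` in case these are isolated. -/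
theorem EdgeMapsTo.ratio_mem {β γ : ℝ} {M K O : Set ℂ} (h : EdgeMapsTo β γ M K O)
    {A B C D x y : ℂ} (hA : A ≠ 0) (hx : x ∈ M) (hy : y ∈ M)
    (hu : (B / A ∈ K ∧ D / A ∈ K) ∨ (B = x * A ∧ D = x * C))
    (hv : C / A ∈ K ∨ (C = y * A ∧ D = y * B)) :
    β * A + C ≠ 0 ∧ (B + γ * D) / (β * A + C) ∈ O := by
  have ratio_v_mem : C / A ∈ M ∪ K := by
    rcases hv with hv | ⟨rfl, -⟩
    · exact .inr hv
    · exact .inl (by rwa [mul_div_cancel_right₀ _ hA])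
  have numerator_eq : B + γ * D = A * (B / A + γ * (D / A)) := by field_simp
  have denominator_eq : β * A + C = A * (β + C / A) := by field_simp
  rw [numerator_eq, denominator_eq, mul_div_mul_left _ _ hA]
  refine ⟨mul_ne_zero hA (h.add_ne_zero _ ratio_v_mem), ?_⟩
  rcases hu with ⟨hB, hD⟩ | ⟨rfl, rfl⟩
  · rcases hv with hC | ⟨rfl, rfl⟩
    · exact h.contract_mem _ hC _ hD _ hB
    · convert h.mul_edgeMap_mem _ (.inr hB) _ hy using 1
      rw [edgeMap]
      field_simp
  · have mul_mem : x * edgeMap β γ (C / A) ∈ O :=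
      ratio_v_mem.elim (h.mul_edgeMap_mem x (.inl hx) _) (h.field_mul_edgeMap_mem x hx _)
    convert mul_mem using 1
    rw [edgeMap]
    field_simp

variable {V : Type*} {β γ : ℝ} {E : Multiset (V × V)} {lam : V → ℂ} {u v : V}

/-- Fields for which the ratios are controlled: `M` need only contain the fields at the
non-isolated vertices, while an isolated vertex merely contributes a nonzero factor `1 + lam v`. -/
structure IsAdmissible (M : Set ℂ) (E : Multiset (V × V)) (lam : V → ℂ) : Prop where
  one_add_ne_zero : ∀ v, 1 + lam v ≠ 0
  mem : ∀ v, Incident E v → lam v ∈ M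

theorem IsAdmissible.of_cons {M : Set ℂ} {e : V × V} (h : IsAdmissible M (e ::ₘ E) lam) :
    IsAdmissible M E lam where
  one_add_ne_zero := h.one_add_ne_zero
  mem v hv := h.mem v (hv.cons e)

theorem IsAdmissible.cons_comm {M : Set ℂ} (h : IsAdmissible M ((u, v) ::ₘ E) lam) :
    IsAdmissible M ((v, u) ::ₘ E) lam where
  one_add_ne_zero := h.one_add_ne_zero
  mem w hw := h.mem w (by simpa [Incident, or_comm] using hw)

variable [DecidableEq V]

theorem IsAdmissible.update_zero {M : Set ℂ} (h0 : 0 ∈ M) (h : IsAdmissible M E lam) (v : V) :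
    IsAdmissible M E (Function.update lam v 0) where
  one_add_ne_zero w := by
    rcases eq_or_ne w v with rfl | hw
    · simp
    · simpa [hw] using h.one_add_ne_zero w
  mem w hw := by
    rcases eq_or_ne w v with rfl | hwv
    · simpa using h0
    · simpa [hwv] using h.mem w hw

theorem IsAdmissible.contract {M : Submonoid ℂ} (hM : ∀ w ∈ M, 1 + w ≠ 0)
    (h : IsAdmissible M ((u, v) ::ₘ E) lam) :
    IsAdmissible M (contractEdges u v E) (Function.update lam u (lam u * lam v)) := by
  have hu : lam u ∈ M := h.mem u ⟨_, Multiset.mem_cons_self _ _, .inl rfl⟩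
  have hv : lam v ∈ M := h.mem v ⟨_, Multiset.mem_cons_self _ _, .inr rfl⟩
  refine ⟨fun w => ?_, fun w hw => ?_⟩ <;> rcases eq_or_ne w u with rfl | hwu
  · simpa using hM _ (mul_mem hu hv)
  · simpa [hwu] using h.one_add_ne_zero w
  · simpa using mul_mem hu hv
  · simpa [hwu] using h.mem w ((hw.of_contractEdges hwu).cons _)

variable [Fintype V]

/-- The induction hypothesis: for all admissible fields the partition function is nonzero and the
ratios at the non-isolated vertices lie in `K`. -/
def RatiosIn (β γ : ℝ) (M K : Set ℂ) (E : Multiset (V × V)) : Prop :=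
  ∀ lam, IsAdmissible M E lam → partitionOn β γ E lam Finset.univ ≠ 0 ∧
    ∀ v, Incident E v → HasRatioIn β γ E lam v K

variable {M : Submonoid ℂ} {K : Set ℂ}

theorem HasRatioIn.cons_loop (hEM : EdgeMapsTo β γ M K K) (h0 : 0 ∈ M)
    (hE : RatiosIn β γ M K E) (hlam : IsAdmissible M ((u, u) ::ₘ E) lam) :
    HasRatioIn β γ ((u, u) ::ₘ E) lam u K := by
  have hβ : (β : ℂ) ≠ 0 := by simpa using hEM.add_ne_zero 0 (.inl h0)
  have ne_zero : partitionAt β γ E lam u false ≠ 0 := by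
    simpa only [partitionAt, partitionOn_update_field_zero] using
      (hE _ (hlam.of_cons.update_zero h0 u)).1
  have ratio_mem : partitionAt β γ E lam u true / partitionAt β γ E lam u false ∈ ↑M ∪ K := by
    by_cases hu : Incident E u
    · exact .inr ((hE _ hlam.of_cons).2 u hu).2
    · rw [partitionAt_true_of_not_incident hu, mul_div_cancel_right₀ _ ne_zero]
      exact .inl (hlam.mem u ⟨_, Multiset.mem_cons_self _ _, .inl rfl⟩)
  simp only [HasRatioIn, partitionAt_cons_self]
  refine ⟨mul_ne_zero (by simpa [edgeW] using hβ) ne_zero, ?_⟩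
  convert hEM.loop_mem _ ratio_mem using 1
  simp only [edgeW, if_true, Bool.false_eq_true, if_false]
  field_simp

theorem RatiosIn.pinned_ratio_mem (hE : RatiosIn β γ M K E) (h0 : 0 ∈ M)
    (hlam : IsAdmissible M E lam) (hu : Incident E u) (v : V) :
    partitionAt₂ β γ E lam u v true false / partitionAt₂ β γ E lam u v false false ∈ K := by
  have ratio := (hE _ (hlam.update_zero h0 v)).2 u hu
  simpa only [HasRatioIn, partitionAt_update_field_zero] using ratio.2

theorem RatiosIn.contracted_ratio_mem (hC : RatiosIn β γ M K (contractEdges u v E))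
    (hM : ∀ w ∈ M, 1 + w ≠ 0) (h0 : 0 ∈ M) (huv : u ≠ v)
    (hlam : IsAdmissible M ((u, v) ::ₘ E) lam) (hu : Incident E u) :
    partitionAt₂ β γ E lam u v true true / partitionAt₂ β γ E lam u v false false ∈ K := by
  have ratio := (hC _ ((hlam.contract hM).update_zero h0 v)).2 u (hu.contractEdges_left v)
  simpa only [HasRatioIn, partitionAt_contractEdges huv] using ratio.2

theorem HasRatioIn.cons_edge (hEM : EdgeMapsTo β γ M K K) (h0 : 0 ∈ M) (huv : u ≠ v)
    (hE : RatiosIn β γ M K E) (hC : RatiosIn β γ M K (contractEdges u v E))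
    (hlam : IsAdmissible M ((u, v) ::ₘ E) lam) : HasRatioIn β γ ((u, v) ::ₘ E) lam u K := by
  have hM w (hw : w ∈ M) : 1 + w ≠ 0 := hEM.one_add_ne_zero w (.inl hw)
  have both_pinned : partitionAt₂ β γ E lam u v false false ≠ 0 := by
    rw [← partitionAt₂_update_field_zero]
    exact (hE _ ((hlam.of_cons.update_zero h0 u).update_zero h0 v)).1
  have ratio := hEM.ratio_mem both_pinned
    (hlam.mem u ⟨_, Multiset.mem_cons_self _ _, .inl rfl⟩)
    (hlam.mem v ⟨_, Multiset.mem_cons_self _ _, .inr rfl⟩)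
    (B := partitionAt₂ β γ E lam u v true false) (C := partitionAt₂ β γ E lam u v false true)
    (D := partitionAt₂ β γ E lam u v true true) ?_ ?_
  · simpa [HasRatioIn, partitionAt_eq_add u v, partitionAt₂_cons, edgeW] using ratio
  · by_cases hu : Incident E u
    · exact .inl ⟨hE.pinned_ratio_mem h0 hlam.of_cons hu v,
        hC.contracted_ratio_mem hM h0 huv hlam hu⟩
    · exact .inr ⟨partitionAt₂_true_of_not_incident huv hu _,
        partitionAt₂_true_of_not_incident huv hu _⟩
  · simp only [partitionAt₂_comm u v]
    by_cases hv : Incident E v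
    · exact .inl (hE.pinned_ratio_mem h0 hlam.of_cons hv u)
    · exact .inr ⟨partitionAt₂_true_of_not_incident huv.symm hv _,
        partitionAt₂_true_of_not_incident huv.symm hv _⟩

theorem EdgeMapsTo.ratiosIn (hEM : EdgeMapsTo β γ M K K) (h0 : 0 ∈ M) (E : Multiset (V × V)) :
    RatiosIn β γ M K E := by
  induction hn : E.card using Nat.strong_induction_on generalizing E with
  | _ n ih =>
  have ratio_first {u v : V} {E' : Multiset (V × V)} {lam : V → ℂ} (hE' : E'.card < n)
      (hlam : IsAdmissible M ((u, v) ::ₘ E') lam) : HasRatioIn β γ ((u, v) ::ₘ E') lam u K := by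
    rcases eq_or_ne u v with rfl | huv
    · exact HasRatioIn.cons_loop hEM h0 (ih _ hE' _ rfl) hlam
    · exact HasRatioIn.cons_edge hEM h0 huv (ih _ hE' _ rfl)
        (ih _ (by simpa [contractEdges] using hE') _ rfl) hlam
  intro lam hlam
  have ratio (v : V) (hv : Incident E v) : HasRatioIn β γ E lam v K := by
    obtain ⟨⟨u, w⟩, he, hv⟩ := hv
    obtain ⟨E', rfl⟩ := Multiset.exists_cons_of_mem he
    have hE' : E'.card < n := by simp [← hn]
    rcases hv with rfl | rfl
    · exact ratio_first hE' hlam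
    · exact (ratio_first hE' hlam.cons_comm).cons_comm
  refine ⟨?_, ratio⟩
  rcases Multiset.empty_or_exists_mem E with rfl | ⟨e, he⟩
  · rw [partitionOn_empty]
    exact Finset.prod_ne_zero_iff.2 fun v _ => hlam.one_add_ne_zero v
  · exact (ratio e.1 ⟨e, he, .inl rfl⟩).partitionOn_ne_zero fun z hz =>
      hEM.one_add_ne_zero z (.inr hz)

end Induction

section DiameterDisk

open scoped ComplexConjugate

variable {p q p' q' β γ t x : ℝ} {z : ℂ}

/-- The closed disk in `ℂ` having the real interval `[p, q]` as a diameter. -/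
def diameterDisk (p q : ℝ) : Set ℂ :=
  Metric.closedBall (((p + q) / 2 : ℝ) : ℂ) ((q - p) / 2)

theorem mem_diameterDisk (hpq : p ≤ q) :
    z ∈ diameterDisk p q ↔ 0 ≤ ((z - p) * conj (q - z)).re := by
  rw [diameterDisk, mem_closedBall_iff_norm,
    ← pow_le_pow_iff_left₀ (norm_nonneg _) (by linarith) two_ne_zero, ← Complex.normSq_eq_norm_sq,
    Complex.normSq_apply]
  simp only [Complex.sub_re, Complex.sub_im, Complex.ofReal_re, Complex.ofReal_im, Complex.mul_re,
    Complex.conj_re, Complex.conj_im]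
  constructor <;> intro h <;> linarith

theorem re_mem_Icc_of_mem_diameterDisk (hz : z ∈ diameterDisk p q) : z.re ∈ Set.Icc p q := by
  have re_le := (Complex.abs_re_le_norm _).trans (mem_closedBall_iff_norm.1 hz)
  rw [Complex.sub_re, Complex.ofReal_re, abs_le] at re_le
  constructor <;> linarith [re_le.1, re_le.2]

theorem diameterDisk_subset_interior (hp : p < p') (hq : q' < q) :
    diameterDisk p' q' ⊆ interior (diameterDisk p q) := by
  refine (Metric.closedBall_subset_ball' ?_).trans Metric.ball_subset_interior_closedBall
  rw [Complex.dist_of_im_eq (by simp), Complex.ofReal_re, Complex.ofReal_re, Real.dist_eq,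
    ← lt_sub_iff_add_lt', abs_lt]
  constructor <;> linarith

theorem ofReal_mem_interior_diameterDisk (hp : p < x) (hq : x < q) :
    (x : ℂ) ∈ interior (diameterDisk p q) :=
  diameterDisk_subset_interior hp hq <| by simp [diameterDisk]

theorem mul_mem_diameterDisk_of_nonneg (hpq : p ≤ q) (ht : 0 ≤ t) (hz : z ∈ diameterDisk p q) :
    t * z ∈ diameterDisk (t * p) (t * q) := by
  rw [mem_diameterDisk hpq] at hz
  rw [mem_diameterDisk (by gcongr), show (t * z - (t * p : ℝ)) * conj ((t * q : ℝ) - t * z) =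
    (t ^ 2 : ℝ) * ((z - p) * conj (q - z)) by simp; ring, Complex.re_ofReal_mul]
  positivity

theorem mul_mem_diameterDisk_of_nonpos (hpq : p ≤ q) (ht : t ≤ 0) (hz : z ∈ diameterDisk p q) :
    t * z ∈ diameterDisk (t * q) (t * p) := by
  rw [mem_diameterDisk hpq] at hz
  rw [mem_diameterDisk (mul_le_mul_of_nonpos_left hpq ht),
    show (t * z - (t * q : ℝ)) * conj ((t * p : ℝ) - t * z) =
      (t ^ 2 : ℝ) * conj ((z - p) * conj (q - z)) by simp; ring,
    Complex.re_ofReal_mul, Complex.conj_re]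
  positivity

theorem edgeMap_ofReal (β γ x : ℝ) : edgeMap β γ x = ((1 + γ * x) / (β + x) : ℝ) := by
  simp [edgeMap]

theorem one_add_mul_div_add_le (hβγ : β * γ ≤ 1) (hp : 0 < β + p) (hpq : p ≤ q) :
    (1 + γ * q) / (β + q) ≤ (1 + γ * p) / (β + p) := by
  rw [div_le_div_iff₀ (by linarith) hp]
  nlinarith

/-- A real Möbius transformation preserves orthogonality to the real axis, so it maps the disk with
diameter `[p, q]` to the disk whose diameter is the image of that interval. -/
theorem edgeMap_mem_diameterDisk (hβγ : β * γ ≤ 1) (hp : 0 < β + p) (hpq : p ≤ q)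
    (hz : z ∈ diameterDisk p q) :
    edgeMap β γ z ∈ diameterDisk ((1 + γ * q) / (β + q)) ((1 + γ * p) / (β + p)) := by
  have hq : 0 < β + q := by linarith
  have hβz : (β : ℂ) + z ≠ 0 := fun h => by
    have re_eq := congrArg Complex.re h
    simp only [Complex.add_re, Complex.ofReal_re, Complex.zero_re] at re_eq
    linarith [(re_mem_Icc_of_mem_diameterDisk hz).1]
  have hβz' : (β : ℂ) + conj z ≠ 0 := by simpa using (map_ne_zero (starRingEnd ℂ)).2 hβz
  have hβp : (β : ℂ) + p ≠ 0 := mod_cast hp.ne'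
  have hβq : (β : ℂ) + q ≠ 0 := mod_cast hq.ne'
  rw [mem_diameterDisk hpq] at hz
  rw [mem_diameterDisk (one_add_mul_div_add_le hβγ hp hpq), ← edgeMap_ofReal, ← edgeMap_ofReal]
  have key : (edgeMap β γ z - edgeMap β γ q) * conj (edgeMap β γ p - edgeMap β γ z) =
      ((β * γ - 1) ^ 2 / ((β + p) * (β + q) * Complex.normSq (β + z)) : ℝ) *
        conj ((z - p) * conj (q - z)) := by
    simp only [edgeMap, map_sub, map_div₀, map_add, map_mul, map_one, Complex.conj_ofReal,
      Complex.conj_conj, Complex.ofReal_div, Complex.ofReal_mul, Complex.ofReal_pow,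
      Complex.ofReal_sub, Complex.ofReal_add, Complex.ofReal_one, Complex.normSq_eq_conj_mul_self]
    field_simp
    ring
  rw [key, Complex.re_ofReal_mul, Complex.conj_re]
  have := Complex.normSq_nonneg (β + z)
  positivity

end DiameterDisk

section ContractingDisk

theorem norm_sub_ofReal_le {w : ℂ} {a : ℝ} (ha : 0 ≤ a) (haw : a ≤ 2 * w.re) : ‖w - a‖ ≤ ‖w‖ := by
  rw [← sq_le_sq₀ (norm_nonneg _) (norm_nonneg _), ← Complex.normSq_eq_norm_sq,
    ← Complex.normSq_eq_norm_sq, Complex.normSq_apply, Complex.normSq_apply]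
  simp only [Complex.sub_re, Complex.sub_im, Complex.ofReal_re, Complex.ofReal_im]
  nlinarith

/-- Conditions under which the disk with diameter `[-α, b]` is mapped into its own interior by all
the operations of `EdgeMapsTo`, for real fields in `[γ / β, 1]`. -/
structure IsContractingDisk (β γ α b : ℝ) : Prop where
  one_lt_beta : 1 < β
  gamma_neg : γ < 0
  alpha_pos : 0 < α
  alpha_lt_one : α < 1
  alpha_le : α ≤ b
  neg_lt_mul : -γ < α * β
  edgeMap_lt : 1 - γ * α < b * (β - α)
  neg_mul_lt : -γ * b < α * (β - 1 - α)
  mul_lt_of_neg_one_lt : -1 < γ → (b + α) / 2 * (1 - γ) < α * (β - α)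

namespace IsContractingDisk

variable {β γ α b t x : ℝ} {w z z' z'' : ℂ} (h : IsContractingDisk β γ α b)

include h

theorem neg_lt_sub : -γ < β - 1 - α := by
  have h1 : -γ * α ≤ -γ * b := mul_le_mul_of_nonneg_left h.alpha_le (by linarith [h.gamma_neg])
  have h2 : -γ * α < (β - 1 - α) * α := by linarith [h.neg_mul_lt]
  exact lt_of_mul_lt_mul_right h2 h.alpha_pos.le

theorem neg_lt_div : -α < γ / β := by
  rw [lt_div_iff₀ (by linarith [h.one_lt_beta])]
  linarith [h.neg_lt_mul]

theorem neg_le_re (hw : w ∈ Complex.ofReal '' Set.Icc (γ / β) 1 ∪ diameterDisk (-α) b) :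
    -α ≤ w.re := by
  rcases hw with ⟨x, hx, rfl⟩ | hw
  · exact h.neg_lt_div.le.trans hx.1
  · exact (re_mem_Icc_of_mem_diameterDisk hw).1

theorem add_ne_zero {a : ℝ} (ha : 1 ≤ a)
    (hw : w ∈ Complex.ofReal '' Set.Icc (γ / β) 1 ∪ diameterDisk (-α) b) : (a : ℂ) + w ≠ 0 := by
  intro h0
  have re_eq := congrArg Complex.re h0
  simp only [Complex.add_re, Complex.ofReal_re, Complex.zero_re] at re_eq
  linarith [h.neg_le_re hw, h.alpha_lt_one]

theorem mul_mem_interior (ht : t < 1) (htb : -t * b < α) (hz : z ∈ diameterDisk (-α) b) :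
    t * z ∈ interior (diameterDisk (-α) b) := by
  have hpos := h.alpha_pos
  have hle := h.alpha_le
  rcases le_total 0 t with ht0 | ht0
  · exact diameterDisk_subset_interior (by nlinarith) (by nlinarith)
      (mul_mem_diameterDisk_of_nonneg (by linarith) ht0 hz)
  · exact diameterDisk_subset_interior (by linarith) (by nlinarith)
      (mul_mem_diameterDisk_of_nonpos (by linarith) ht0 hz)

theorem neg_mul_lt_of_mem_Icc (hx : x ∈ Set.Icc (γ / β) 1) : -x * b < α := by
  have hb : 0 < b := h.alpha_pos.trans_le h.alpha_le
  have hβ : 0 < β := by linarith [h.one_lt_beta]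
  calc -x * b ≤ -(γ / β) * b := by gcongr; exact hx.1
    _ = -γ * b / β := by ring
    _ < α := by
      rw [div_lt_iff₀ hβ]
      nlinarith [h.neg_mul_lt, h.alpha_pos]

theorem field_mul_mem_interior (hx : x ∈ Set.Icc (γ / β) 1)
    (hz : z ∈ interior (diameterDisk (-α) b)) : x * z ∈ interior (diameterDisk (-α) b) := by
  rcases hx.2.lt_or_eq with hx1 | rfl
  · exact h.mul_mem_interior hx1 (h.neg_mul_lt_of_mem_Icc hx) (interior_subset hz)
  · simpa using hz

theorem edgeMap_neg_lt : (1 + γ * -α) / (β + -α) < b := by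
  rw [div_lt_iff₀ (by linarith [h.one_lt_beta, h.alpha_lt_one])]
  linarith [h.edgeMap_lt]

theorem edgeMap_mem_interior (hz : z ∈ diameterDisk (-α) b) :
    edgeMap β γ z ∈ interior (diameterDisk (-α) b) := by
  have hβ := h.one_lt_beta
  have hα := h.alpha_pos
  have hb : 0 < b := hα.trans_le h.alpha_le
  refine diameterDisk_subset_interior ?_ h.edgeMap_neg_lt
    (edgeMap_mem_diameterDisk ?_ (by linarith [h.alpha_lt_one]) (by linarith) hz)
  · rw [lt_div_iff₀ (by linarith)]
    nlinarith [h.neg_mul_lt]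
  · nlinarith [h.gamma_neg]

theorem le_edgeMap_field (hx : x ∈ Set.Icc (γ / β) 1) :
    (1 + γ) / (β + 1) ≤ (1 + γ * x) / (β + x) := by
  have hβx : 0 < β + x := by linarith [hx.1, h.neg_lt_div, h.alpha_lt_one, h.one_lt_beta]
  have hβγ : β * γ ≤ 1 := by nlinarith [h.gamma_neg, h.one_lt_beta]
  simpa using one_add_mul_div_add_le hβγ hβx hx.2

theorem edgeMap_field_lt_one (hx : x ∈ Set.Icc (γ / β) 1) : (1 + γ * x) / (β + x) < 1 := by
  have hxα : -α < x := h.neg_lt_div.trans_le hx.1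
  have hα := h.alpha_lt_one
  have hγ := h.gamma_neg
  rw [div_lt_one (by linarith [h.one_lt_beta])]
  nlinarith [h.neg_lt_sub]

theorem edgeMap_field_mem_interior (hx : x ∈ Set.Icc (γ / β) 1) :
    edgeMap β γ x ∈ interior (diameterDisk (-α) b) := by
  have hxα : -α < x := h.neg_lt_div.trans_le hx.1
  have hβ := h.one_lt_beta
  have hβγ : β * γ ≤ 1 := by nlinarith [h.gamma_neg]
  rw [edgeMap_ofReal]
  refine ofReal_mem_interior_diameterDisk ((lt_div_iff₀ (by linarith)).2 ?_ |>.trans_le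
    (h.le_edgeMap_field hx))
    ((one_add_mul_div_add_le hβγ (by linarith [h.alpha_lt_one]) hxα.le).trans_lt h.edgeMap_neg_lt)
  linarith [h.neg_lt_mul, h.alpha_pos]

theorem neg_edgeMap_field_mul_lt (hx : x ∈ Set.Icc (γ / β) 1) :
    -((1 + γ * x) / (β + x)) * b < α := by
  have hα := h.alpha_pos
  have hb : 0 < b := hα.trans_le h.alpha_le
  have hβ : 0 < β + 1 := by linarith [h.one_lt_beta]
  calc -((1 + γ * x) / (β + x)) * b ≤ -((1 + γ) / (β + 1)) * b := by
        exact mul_le_mul_of_nonneg_right (neg_le_neg (h.le_edgeMap_field hx)) hb.le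
    _ = (-γ * b - b) / (β + 1) := by ring
    _ < α := by
      rw [div_lt_iff₀ hβ]
      nlinarith [h.neg_mul_lt]

theorem radius_add_lt (hw : β - α ≤ w.re) :
    (b + α) / 2 * (1 - γ) + (b - α) / 2 * ‖w - (1 + γ : ℝ)‖ < (b + α) / 2 * ‖w‖ := by
  have hα := h.alpha_pos
  have hc : 0 ≤ (b - α) / 2 := by linarith [h.alpha_le]
  have hαw : α * (β - α) ≤ α * ‖w‖ :=
    mul_le_mul_of_nonneg_left (hw.trans (Complex.re_le_norm w)) hα.le
  rcases le_or_gt γ (-1) with hγ | hγ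
  · have triangle : ‖w - (1 + γ : ℝ)‖ ≤ ‖w‖ + -(1 + γ) := by
      simpa [Real.norm_of_nonpos (show 1 + γ ≤ 0 by linarith), -Complex.ofReal_add]
        using norm_sub_le w (1 + γ : ℝ)
    linarith [mul_le_mul_of_nonneg_left triangle hc, h.neg_mul_lt]
  · have contraction : ‖w - (1 + γ : ℝ)‖ ≤ ‖w‖ :=
      norm_sub_ofReal_le (by linarith) (by linarith [h.neg_lt_sub, h.gamma_neg])
    linarith [mul_le_mul_of_nonneg_left contraction hc, h.mul_lt_of_neg_one_lt hγ]

theorem contract_mem_interior (hz : z ∈ diameterDisk (-α) b) (hz' : z' ∈ diameterDisk (-α) b)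
    (hz'' : z'' ∈ diameterDisk (-α) b) :
    (z'' + γ * z') / (β + z) ∈ interior (diameterDisk (-α) b) := by
  have hγ := h.gamma_neg
  have hw_re : β - α ≤ (β + z).re := by
    have := (re_mem_Icc_of_mem_diameterDisk hz).1
    simp only [Complex.add_re, Complex.ofReal_re]
    linarith
  have hw0 : 0 < ‖β + z‖ :=
    lt_of_lt_of_le (by linarith [h.neg_lt_sub]) (hw_re.trans (Complex.re_le_norm _))
  have bound := h.radius_add_lt hw_re
  rw [show (b - α) / 2 = (-α + b) / 2 by ring, show (b + α) / 2 = (b - -α) / 2 by ring] at bound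
  refine Metric.ball_subset_interior_closedBall (mem_ball_iff_norm.2 ?_)
  rw [div_sub' (norm_pos_iff.1 hw0), norm_div, div_lt_iff₀ hw0]
  have hc : 0 ≤ (-α + b) / 2 := by linarith [h.alpha_le]
  set c : ℝ := (-α + b) / 2
  set r : ℝ := (b - -α) / 2
  have split : z'' + γ * z' - (β + z) * c =
      (z'' - c) + γ * (z' - c) - c * (β + z - (1 + γ : ℝ)) := by
    push_cast; ring
  calc ‖z'' + γ * z' - (β + z) * c‖
    _ ≤ ‖z'' - c‖ + ‖γ * (z' - c)‖ + ‖c * (β + z - (1 + γ : ℝ))‖ := by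
        rw [split]
        exact (norm_sub_le _ _).trans (add_le_add_left (norm_add_le _ _) _)
    _ ≤ r + -γ * r + c * ‖β + z - (1 + γ : ℝ)‖ := by
        rw [norm_mul, norm_mul, Complex.norm_of_nonneg hc, Complex.norm_real,
          Real.norm_of_nonpos hγ.le]
        gcongr
        · exact mem_closedBall_iff_norm.1 hz''
        · linarith
        · exact mem_closedBall_iff_norm.1 hz'
    _ < r * ‖β + z‖ := by linarith

theorem edgeMapsTo :
    EdgeMapsTo β γ (Complex.ofReal '' Set.Icc (γ / β) 1) (diameterDisk (-α) b)
      (interior (diameterDisk (-α) b)) where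
  one_add_ne_zero w hw := by simpa using h.add_ne_zero le_rfl hw
  add_ne_zero w hw := h.add_ne_zero h.one_lt_beta.le hw
  loop_mem w hw := by
    have div_neg : γ / β < 0 := div_neg_of_neg_of_pos h.gamma_neg (by linarith [h.one_lt_beta])
    have left_mem : γ / β ∈ Set.Icc (γ / β) 1 := ⟨le_rfl, by linarith⟩
    rcases hw with ⟨x, hx, rfl⟩ | hw
    · rw [mul_div_right_comm, mul_comm]
      exact mod_cast h.field_mul_mem_interior hx
        (ofReal_mem_interior_diameterDisk h.neg_lt_div (by linarith [h.alpha_pos, h.alpha_le]))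
    · rw [mul_div_right_comm]
      exact mod_cast h.mul_mem_interior (by linarith) (h.neg_mul_lt_of_mem_Icc left_mem) hw
  mul_edgeMap_mem := by
    rintro _ (⟨x, hx, rfl⟩ | hw) _ ⟨y, hy, rfl⟩
    · exact h.field_mul_mem_interior hx (h.edgeMap_field_mem_interior hy)
    · rw [edgeMap_ofReal, mul_comm]
      exact h.mul_mem_interior (h.edgeMap_field_lt_one hy) (h.neg_edgeMap_field_mul_lt hy) hw
  field_mul_edgeMap_mem := by
    rintro _ ⟨x, hx, rfl⟩ z hz
    exact h.field_mul_mem_interior hx (h.edgeMap_mem_interior hz)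
  contract_mem z hz z' hz' z'' hz'' := h.contract_mem_interior hz hz' hz''

end IsContractingDisk

end ContractingDisk

section Parameters

variable {β γ α : ℝ}

theorem exists_isContractingDisk_of_le_neg_one (hβ : 1 < β) (hγ : γ ≤ -1) (hα : 0 < α)
    (hα1 : α < 1) (hγα : -γ < α * β) (hsub : -γ < β - 1 - α)
    (hprod : -γ * (1 - γ * α) < α * (β - 1 - α) * (β - α)) :
    ∃ b, IsContractingDisk β γ α b := by
  have hβα : 0 < β - α := by linarith
  have hγ0 : 0 < -γ := by linarith
  have gap : max α ((1 - γ * α) / (β - α)) < α * (β - 1 - α) / -γ := by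
    refine max_lt ?_ ?_
    · rw [lt_div_iff₀ hγ0]
      exact mul_lt_mul_of_pos_left hsub hα
    · rw [div_lt_div_iff₀ hβα hγ0]
      linarith
  obtain ⟨b, hb, hb'⟩ := exists_between gap
  obtain ⟨hαb, hTb⟩ := max_lt_iff.1 hb
  rw [div_lt_iff₀ hβα] at hTb
  rw [lt_div_iff₀ hγ0, mul_comm] at hb'
  exact ⟨b, hβ, by linarith, hα, hα1, hαb.le, hγα, hTb, hb', fun h => absurd h hγ.not_gt⟩

theorem exists_isContractingDisk_of_neg_one_lt (hγ : γ < 0) (hγ1 : -1 < γ)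
    (h : -γ < β - 1.86) : ∃ b, IsContractingDisk β γ (1 / 2) b := by
  have hβ : 0 < β - 1 / 2 := by linarith
  have hγ' : 0 < 1 - γ := by linarith
  have gap : max (1 / 2) ((1 - γ * (1 / 2)) / (β - 1 / 2)) < (β - 1 / 2) / (1 - γ) - 1 / 2 := by
    refine max_lt ?_ ?_
    · rw [lt_sub_iff_add_lt, lt_div_iff₀ hγ']
      linarith
    · rw [lt_sub_iff_add_lt, lt_div_iff₀ hγ', div_add' _ _ _ hβ.ne', div_mul_eq_mul_div,
        div_lt_iff₀ hβ]
      nlinarith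
  obtain ⟨b, hb, hb'⟩ := exists_between gap
  obtain ⟨hαb, hTb⟩ := max_lt_iff.1 hb
  rw [div_lt_iff₀ hβ] at hTb
  rw [lt_sub_iff_add_lt, lt_div_iff₀ hγ'] at hb'
  refine ⟨b, by linarith, hγ, by norm_num, by norm_num, hαb.le, by linarith, hTb, ?_,
    fun _ => by linarith⟩
  nlinarith

theorem exists_isContractingDisk_of_neg_le (hγ : γ < 0) (hγ' : -γ ≤ 3 / 2) (h : -γ < β - 1.86) :
    ∃ α b, IsContractingDisk β γ α b := by
  rcases le_or_gt γ (-1) with hγ1 | hγ1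
  · exact ⟨1 / 2, exists_isContractingDisk_of_le_neg_one (by linarith) hγ1 (by norm_num)
      (by norm_num) (by linarith) (by linarith) (by nlinarith)⟩
  · exact ⟨1 / 2, exists_isContractingDisk_of_neg_one_lt hγ hγ1 h⟩

theorem exists_isContractingDisk_of_lt_neg (hβ : 2 < β) (hγ : γ ≤ -1)
    (h : -γ * (β ^ 2 - 1) < β ^ 2 * (β - 2)) : ∃ α b, IsContractingDisk β γ α b := by
  have hβ0 : 0 < β := by linarith
  have hα0 : 0 < -γ / β := div_pos (by linarith) hβ0
  have hsub : -γ < β - 1 - -γ / β := by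
    have : -γ * (β + 1) < β * (β - 1) := by nlinarith
    rw [lt_sub_iff_add_lt, add_div' _ _ _ hβ0.ne', div_lt_iff₀ hβ0]
    linarith
  have hα1 : -γ / β < 1 := by
    rw [div_lt_one hβ0]
    linarith
  have hprod : -γ * (1 - γ * (-γ / β)) < -γ / β * (β - 1 - -γ / β) * (β - -γ / β) := by
    have factor : -γ / β * (β - 1 - -γ / β) * (β - -γ / β) - -γ * (1 - γ * (-γ / β)) =
        -γ / β ^ 3 * (β ^ 4 - 2 * β ^ 3 + 2 * γ * β ^ 2 - γ * β + γ ^ 2 - β ^ 2 * γ ^ 2) := by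
      field_simp
      ring
    have pos : 0 < β ^ 4 - 2 * β ^ 3 + 2 * γ * β ^ 2 - γ * β + γ ^ 2 - β ^ 2 * γ ^ 2 := by
      nlinarith
    rw [← sub_pos, factor]
    exact mul_pos (div_pos (by linarith) (by positivity)) pos
  -- `α = -γ / β` violates only `-γ < α * β`, and the other conditions are open.
  have near : ∀ᶠ α in 𝓝 (-γ / β), α < 1 ∧ -γ < β - 1 - α ∧
      -γ * (1 - γ * α) < α * (β - 1 - α) * (β - α) :=
    (gt_mem_nhds hα1).and <|
      (ContinuousAt.eventually_lt (by fun_prop) (by fun_prop) hsub).and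
        (ContinuousAt.eventually_lt (by fun_prop) (by fun_prop) hprod)
  obtain ⟨α, ⟨hα1, hsub, hprod⟩, hα⟩ :=
    ((near.filter_mono nhdsWithin_le_nhds).and (self_mem_nhdsWithin (s := Set.Ioi (-γ / β)))).exists
  exact ⟨α, exists_isContractingDisk_of_le_neg_one (by linarith) hγ (hα0.trans hα) hα1
    ((div_lt_iff₀ hβ0).1 hα) hsub hprod⟩

-- The two branches have maxima of about `0.134` (at `β = 2 + √3`) and `0.122`.
theorem gFun_lt (hβ : 1 < β) : gFun β < 0.14 := by
  have h1 : 0 < β ^ 2 - 1 := by nlinarith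
  have h2 : 0 < β ^ 3 + β ^ 2 - β := by nlinarith
  refine max_lt ?_ ?_
  · rw [div_lt_iff₀ h1]
    nlinarith [sq_nonneg (β - 3.5)]
  · rw [div_lt_iff₀ h2]
    nlinarith [mul_nonneg (sub_pos.2 hβ).le (sq_nonneg (β - 2.6)),
      mul_nonneg (sub_pos.2 hβ).le (sq_nonneg (β - 2.5))]

theorem gFun_of_three_le (hβ : 3 ≤ β) : gFun β = (β - 2) / (β ^ 2 - 1) := by
  refine max_eq_left ?_
  rw [div_le_div_iff₀ (by nlinarith) (by nlinarith)]
  nlinarith [sq_nonneg (β - 3), mul_nonneg (sq_nonneg β) (sub_nonneg.2 hβ), sq_nonneg β]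

theorem exists_isContractingDisk (hβ : 1 < β) (hγ : γ < 0) (h : 2 - gFun β < β + γ) :
    ∃ α b, IsContractingDisk β γ α b := by
  have hg := gFun_lt hβ
  rcases le_or_gt (-γ) (3 / 2) with hγ' | hγ'
  · exact exists_isContractingDisk_of_neg_le hγ hγ' (by linarith)
  · have hβ3 : 3 ≤ β := by linarith
    have hβ1 : 0 < β ^ 2 - 1 := by nlinarith
    refine exists_isContractingDisk_of_lt_neg (by linarith) (by linarith) ?_
    rw [gFun_of_three_le hβ3] at h
    calc -γ * (β ^ 2 - 1) < (β - 2 + (β - 2) / (β ^ 2 - 1)) * (β ^ 2 - 1) := by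
          gcongr; linarith
      _ = β ^ 2 * (β - 2) := by field_simp; ring

end Parameters

section Perturbation

open Metric

theorem eventually_forall_mem_thickening {X Y Z : Type*} [TopologicalSpace X]
    [PseudoMetricSpace Y] [TopologicalSpace Z] {x₀ : X} {A : Set Y} {O : Set Z} {f : X × Y → Z}
    (hA : IsCompact A) (hO : IsOpen O) (hf : ∀ a ∈ A, ContinuousAt f (x₀, a))
    (hfO : ∀ a ∈ A, f (x₀, a) ∈ O) :
    ∀ᶠ δ in 𝓝[>] (0 : ℝ), ∀ᶠ x in 𝓝 x₀, ∀ a ∈ thickening δ A, f (x, a) ∈ O := by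
  have near : ∀ᶠ q in 𝓝 x₀ ×ˢ 𝓝ˢ A, f q ∈ O := hA.mem_prod_nhdsSet_of_forall fun a ha => by
    rw [← nhds_prod_eq]
    exact (hf a ha).preimage_mem_nhds (hO.mem_nhds (hfO a ha))
  obtain ⟨P, hP, Q, hQ, hPQ⟩ := Filter.eventually_prod_iff.1 near
  obtain ⟨δ₀, hδ₀, hδ₀Q⟩ := (hasBasis_nhdsSet_thickening hA).eventually_iff.1 hQ
  filter_upwards [Ioo_mem_nhdsGT hδ₀] with δ hδ
  filter_upwards [hP] with x hx a ha
  exact hPQ hx (hδ₀Q (thickening_mono hδ.2.le A ha))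

theorem mk_mem_thickening_prod {X Y : Type*} [PseudoMetricSpace X] [PseudoMetricSpace Y] {δ : ℝ}
    {A : Set X} {B : Set Y} {x : X} {y : Y} (hx : x ∈ thickening δ A) (hy : y ∈ thickening δ B) :
    (x, y) ∈ thickening δ (A ×ˢ B) := by
  obtain ⟨a, ha, hxa⟩ := mem_thickening_iff.1 hx
  obtain ⟨b, hb, hyb⟩ := mem_thickening_iff.1 hy
  exact mem_thickening_iff.2 ⟨(a, b), ⟨ha, hb⟩, max_lt hxa hyb⟩

theorem continuousAt_mul_edgeMap {β γ : ℝ} {a : ℂ × ℂ} (ha : (β : ℂ) + a.2 ≠ 0) :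
    ContinuousAt (fun q : (ℝ × ℝ) × ℂ × ℂ => q.2.1 * edgeMap q.1.1 q.1.2 q.2.2) ((β, γ), a) :=
  ContinuousAt.mul (by fun_prop) (ContinuousAt.div (by fun_prop) (by fun_prop) ha)

theorem EdgeMapsTo.eventually_thickening {β γ : ℝ} {I K O : Set ℂ} (h : EdgeMapsTo β γ I K O)
    (hβ : β ≠ 0) (hI : IsCompact I) (hK : IsCompact K) (hO : IsOpen O) :
    ∃ δ > 0, ∀ᶠ p : ℝ × ℝ in 𝓝 (β, γ), EdgeMapsTo p.1 p.2 (thickening δ I) K O := by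
  have hL := hI.union hK
  have one_add := eventually_forall_mem_thickening (x₀ := (β, γ)) (f := fun q => 1 + q.2) hL
    isOpen_compl_singleton (fun _ _ => by fun_prop) h.one_add_ne_zero
  have add := eventually_forall_mem_thickening (x₀ := (β, γ)) (f := fun q => (q.1.1 : ℂ) + q.2) hL
    isOpen_compl_singleton (fun _ _ => by fun_prop) h.add_ne_zero
  have loop := eventually_forall_mem_thickening (x₀ := (β, γ))
    (f := fun q => (q.1.2 : ℂ) * q.2 / (q.1.1 : ℂ)) hL hO
    (fun _ _ => ContinuousAt.div (by fun_prop) (by fun_prop) (mod_cast hβ)) h.loop_mem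
  have mul_edgeMap := eventually_forall_mem_thickening (x₀ := (β, γ)) (hL.prod hI) hO
    (fun a ha => continuousAt_mul_edgeMap (h.add_ne_zero a.2 (.inl ha.2)))
    (fun a ha => h.mul_edgeMap_mem a.1 ha.1 a.2 ha.2)
  have field_mul_edgeMap := eventually_forall_mem_thickening (x₀ := (β, γ)) (hI.prod hK) hO
    (fun a ha => continuousAt_mul_edgeMap (h.add_ne_zero a.2 (.inr ha.2)))
    (fun a ha => h.field_mul_edgeMap_mem a.1 ha.1 a.2 ha.2)
  have contract := eventually_forall_mem_thickening (x₀ := (β, γ))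
    (f := fun q : (ℝ × ℝ) × ℂ × ℂ × ℂ =>
      (q.2.2.2 + (q.1.2 : ℂ) * q.2.2.1) / ((q.1.1 : ℂ) + q.2.1)) (hK.prod (hK.prod hK)) hO
    (fun a ha => ContinuousAt.div (by fun_prop) (by fun_prop) (h.add_ne_zero a.1 (.inr ha.1)))
    (fun a ha => h.contract_mem a.1 ha.1 a.2.1 ha.2.1 a.2.2 ha.2.2)
  obtain ⟨δ, ⟨hδ1, hδ2, hδ3, hδ4, hδ5, hδ6⟩, hδ⟩ := ((one_add.and <| add.and <| loop.and <|
    mul_edgeMap.and <| field_mul_edgeMap.and contract).and self_mem_nhdsWithin).exists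
  have hδ : 0 < δ := hδ
  have subset : thickening δ I ∪ K ⊆ thickening δ (I ∪ K) :=
    Set.union_subset (thickening_subset_of_subset δ Set.subset_union_left)
      (Set.subset_union_right.trans (self_subset_thickening hδ _))
  have hKδ := self_subset_thickening hδ K
  refine ⟨δ, hδ, ?_⟩
  filter_upwards [hδ1, hδ2, hδ3, hδ4, hδ5, hδ6] with p h1 h2 h3 h4 h5 h6
  exact ⟨fun w hw => h1 w (subset hw), fun w hw => h2 w (subset hw), fun w hw => h3 w (subset hw),
    fun w hw y hy => h4 (w, y) (mk_mem_thickening_prod (subset hw) hy),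
    fun x hx z hz => h5 (x, z) (mk_mem_thickening_prod hx (hKδ hz)),
    fun z hz z' hz' z'' hz'' => h6 (z, z', z'') (mk_mem_thickening_prod (hKδ hz)
      (mk_mem_thickening_prod (hKδ hz') (hKδ hz'')))⟩

end Perturbation

section FieldMonoid

theorem abs_arg_mul_le {x y : ℂ} (hx : x ≠ 0) (hy : y ≠ 0) :
    |(x * y).arg| ≤ |x.arg| + |y.arg| := by
  have triangle := InnerProductGeometry.angle_le_angle_add_angle (x * y) (1 * y) 1
  rwa [Complex.angle_mul_right hy, one_mul, Complex.angle_one_right (mul_ne_zero hx hy),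
    Complex.angle_one_right hx, Complex.angle_one_right hy] at triangle

/-- The image under `exp` of the sector `|im w| ≤ -η * re w`, together with `0`: a multiplicatively
closed neighbourhood of `[0, 1)`, close to `[0, 1]` when `η` is small. The point `0` belongs to it
because `log 0 = 0` and `arg 0 = 0`. -/
noncomputable def expSector (η : ℝ) : Submonoid ℂ where
  carrier := {z | |z.arg| ≤ -η * Real.log ‖z‖}
  one_mem' := by simp
  mul_mem' {x y} hx hy := by
    rcases eq_or_ne x 0 with rfl | hx0
    · simp
    rcases eq_or_ne y 0 with rfl | hy0
    · simp
    simp only [Set.mem_ofPred_eq] at hx hy ⊢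
    rw [norm_mul, Real.log_mul (norm_ne_zero_iff.2 hx0) (norm_ne_zero_iff.2 hy0)]
    linarith [abs_arg_mul_le hx0 hy0]

variable {η δ t : ℝ} {z : ℂ}

theorem mem_expSector : z ∈ expSector η ↔ |z.arg| ≤ -η * Real.log ‖z‖ := Iff.rfl

theorem zero_mem_expSector (η : ℝ) : 0 ∈ expSector η := by simp [mem_expSector]

theorem norm_le_one_of_mem_expSector (hη : 0 < η) (hz : z ∈ expSector η) : ‖z‖ ≤ 1 := by
  have := (abs_nonneg _).trans (mem_expSector.1 hz)
  refine (Real.log_nonpos_iff (norm_nonneg z)).1 ?_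
  by_contra! hlog
  nlinarith

theorem norm_sub_norm_le_of_mem_expSector (hη : 0 < η) (hz : z ∈ expSector η) :
    ‖z - ‖z‖‖ ≤ η := by
  have polar : z - ‖z‖ = ‖z‖ * (Complex.exp (Complex.I * z.arg) - 1) := by
    rw [mul_sub, mul_comm Complex.I, Complex.norm_mul_exp_arg_mul_I, mul_one]
  calc ‖z - ‖z‖‖ = ‖z‖ * ‖Complex.exp (Complex.I * z.arg) - 1‖ := by
        rw [polar, norm_mul, Complex.norm_of_nonneg (norm_nonneg z)]
    _ ≤ ‖z‖ * |z.arg| := by gcongr; exact Real.norm_exp_I_mul_ofReal_sub_one_le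
    _ ≤ ‖z‖ * (-η * Real.log ‖z‖) := by gcongr; exact hz
    _ = η * Real.negMulLog ‖z‖ := by rw [Real.negMulLog]; ring
    _ ≤ η * (1 - ‖z‖) := by gcongr; exact Real.negMulLog_le_one_sub_self (norm_nonneg z)
    _ ≤ η := by nlinarith [norm_nonneg z]

theorem expSector_mem_nhds_zero (hη : 0 < η) : (expSector η : Set ℂ) ∈ 𝓝 0 := by
  filter_upwards [Metric.ball_mem_nhds 0 (Real.exp_pos (-(Real.pi / η)))] with z hz
  rcases eq_or_ne z 0 with rfl | hz0
  · exact zero_mem_expSector η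
  have log_le : Real.log ‖z‖ ≤ -(Real.pi / η) :=
    (Real.log_le_iff_le_exp (norm_pos_iff.2 hz0)).2 (mem_ball_zero_iff.1 hz).le
  calc |z.arg| ≤ Real.pi := Complex.abs_arg_le_pi z
    _ = -η * -(Real.pi / η) := by field_simp
    _ ≤ -η * Real.log ‖z‖ := mul_le_mul_of_nonpos_left log_le (by linarith)

theorem expSector_mem_nhds_ofReal (hη : 0 < η) (ht : 0 ≤ t) (ht1 : t < 1) :
    (expSector η : Set ℂ) ∈ 𝓝 (t : ℂ) := by
  rcases ht.eq_or_lt with rfl | ht0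
  · exact_mod_cast expSector_mem_nhds_zero hη
  have arg_cont : ContinuousAt (fun z : ℂ => |z.arg|) t :=
    (Complex.continuousAt_arg (Complex.ofReal_mem_slitPlane.2 ht0)).abs
  have log_cont : ContinuousAt (fun z : ℂ => -η * Real.log ‖z‖) t :=
    continuousAt_const.mul (continuous_norm.continuousAt.log (by simpa using ht0.ne'))
  refine (arg_cont.eventually_lt log_cont ?_).mono fun z hz => hz.le
  rw [Complex.arg_ofReal_of_nonneg ht, Complex.norm_of_nonneg ht, abs_zero, neg_mul, neg_pos]
  exact mul_neg_of_pos_of_neg hη (Real.log_neg ht0 ht1)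

/-- The submonoid `N` of the unit disk together with the part of `-N` of norm at most `τ`, which
makes room for negative fields. -/
def signedSubmonoid (N : Submonoid ℂ) (hN : ∀ z ∈ N, ‖z‖ ≤ 1) (τ : ℝ) : Submonoid ℂ where
  carrier := {z | z ∈ N ∨ (-z ∈ N ∧ ‖z‖ ≤ τ)}
  one_mem' := .inl N.one_mem
  mul_mem' {x y} hx hy := by
    rcases hx with hx | ⟨hx, hxτ⟩ <;> rcases hy with hy | ⟨hy, hyτ⟩
    · exact .inl (mul_mem hx hy)
    · refine .inr ⟨by simpa using mul_mem hx hy, ?_⟩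
      rw [norm_mul]
      exact (mul_le_of_le_one_left (norm_nonneg y) (hN x hx)).trans hyτ
    · refine .inr ⟨by simpa using mul_mem hx hy, ?_⟩
      rw [norm_mul]
      exact (mul_le_of_le_one_right (norm_nonneg x) (hN y hy)).trans hxτ
    · exact .inl (by simpa using mul_mem hx hy)

theorem exists_submonoid_subset_thickening {a : ℝ} (ha : -1 < a) (ha0 : a < 0) (hδ : 0 < δ) :
    ∃ M : Submonoid ℂ, 0 ∈ M ∧
      (M : Set ℂ) ⊆ Metric.thickening δ (Complex.ofReal '' Set.Icc a 1) ∧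
      ∀ t : ℝ, a < t → t < 1 → (M : Set ℂ) ∈ 𝓝 (t : ℂ) := by
  have hη : 0 < δ / 2 := half_pos hδ
  have norm_le_one z (hz : z ∈ expSector (δ / 2)) := norm_le_one_of_mem_expSector hη hz
  have near {z : ℂ} (hz : z ∈ expSector (δ / 2)) : ‖z - ‖z‖‖ < δ :=
    (norm_sub_norm_le_of_mem_expSector hη hz).trans_lt (half_lt_self hδ)
  refine ⟨signedSubmonoid (expSector (δ / 2)) norm_le_one (-a), .inl (zero_mem_expSector _),
    fun z hz => Metric.mem_thickening_iff.2 ?_, fun t hat ht1 => ?_⟩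
  · rcases hz with hz | ⟨hz, hza⟩
    · refine ⟨_, ⟨‖z‖, ⟨by linarith [norm_nonneg z], norm_le_one z hz⟩, rfl⟩, ?_⟩
      exact (dist_eq_norm _ _).trans_lt (near hz)
    · refine ⟨_, ⟨-‖z‖, ⟨by linarith, by linarith [norm_nonneg z]⟩, rfl⟩, ?_⟩
      rw [dist_eq_norm, ← norm_neg]
      simpa [sub_eq_add_neg, add_comm] using near hz
  · rcases le_or_gt 0 t with ht | ht
    · exact Filter.mem_of_superset (expSector_mem_nhds_ofReal hη ht ht1) fun z => .inl
    · have neg_near : ∀ᶠ z : ℂ in 𝓝 (t : ℂ), -z ∈ expSector (δ / 2) := by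
        refine continuous_neg.continuousAt.preimage_mem_nhds ?_
        exact_mod_cast expSector_mem_nhds_ofReal hη (t := -t) (by linarith) (by linarith)
      have norm_near : ∀ᶠ z : ℂ in 𝓝 (t : ℂ), ‖z‖ < -a := by
        refine continuous_norm.continuousAt.eventually_lt_const ?_
        simpa [abs_of_neg ht] using hat
      filter_upwards [neg_near, norm_near] with z hz hza using .inr ⟨hz, hza.le⟩

end FieldMonoid

section RescaledFields

variable {V : Type*} [DecidableEq V] {β γ s a : ℝ} {E : Multiset (V × V)} {lam : V → ℂ} {v : V}
  {K : Set ℂ}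

theorem HasRatioIn.of_rescaledField [Fintype V] (hs : s ≠ 0)
    (h : HasRatioIn (β / s) (γ * s) E (rescaledField s E lam) v K) : HasRatioIn β γ E lam v K := by
  have hs' : (s : ℂ) ^ E.card ≠ 0 := pow_ne_zero _ (mod_cast hs)
  simp only [HasRatioIn, partitionAt, partitionOn_eq_rescaled (β := β) (γ := γ) hs,
    mul_div_mul_left _ _ hs']
  exact ⟨mul_ne_zero hs' h.1, h.2⟩

theorem isAdmissible_rescaledField {M : Submonoid ℂ} (hM : ∀ w ∈ M, 1 + w ≠ 0)
    (hs : (s : ℂ)⁻¹ ∈ M) (hlam : ∀ v, lam v * (s : ℂ)⁻¹ ∈ M ∧ 1 + lam v ≠ 0) :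
    IsAdmissible M E (rescaledField s E lam) := by
  have mem (v : V) (hv : Incident E v) : rescaledField s E lam v ∈ M := by
    obtain ⟨k, hk⟩ := Nat.exists_eq_succ_of_ne_zero (edgeDegree_eq_zero.not_left.2 hv)
    rw [rescaledField, hk, pow_succ', ← mul_assoc]
    exact mul_mem (hlam v).1 (pow_mem hs k)
  refine ⟨fun v => ?_, mem⟩
  by_cases hv : Incident E v
  · exact hM _ (mem v hv)
  · simpa [rescaledField, edgeDegree_eq_zero.2 hv] using (hlam v).2

theorem EdgeMapsTo.exists_rescaled {I O : Set ℂ} (h : EdgeMapsTo β γ I K O) (hβ : β ≠ 0)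
    (hI : IsCompact I) (hK : IsCompact K) (hO : IsOpen O) :
    ∃ δ > 0, ∃ s > 1, EdgeMapsTo (β / s) (γ * s) (Metric.thickening δ I) K O := by
  obtain ⟨δ, hδ, near⟩ := h.eventually_thickening hβ hI hK hO
  have rescaling : Filter.Tendsto (fun s : ℝ => (β / s, γ * s)) (𝓝 1) (𝓝 (β, γ)) := by
    have : ContinuousAt (fun s : ℝ => (β / s, γ * s)) 1 := by fun_prop (disch := norm_num)
    simpa [ContinuousAt] using this
  obtain ⟨s, hsδ, hs⟩ := (((rescaling.eventually near).filter_mono nhdsWithin_le_nhds).and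
    (self_mem_nhdsWithin (s := Set.Ioi (1 : ℝ)))).exists
  exact ⟨δ, hδ, s, hs, hsδ⟩

/-- Rescaling by some `s > 1` moves the fields in `[a, 1]` to `[a / s, 1 / s]`, which lies in the
interior of a submonoid. -/
theorem EdgeMapsTo.exists_isOpen_hasRatioIn
    (h : EdgeMapsTo β γ (Complex.ofReal '' Set.Icc a 1) K (interior K)) (hK : IsCompact K)
    (hβ : β ≠ 0) (ha : -1 < a) (ha0 : a < 0) :
    ∃ U : Set ℂ, IsOpen U ∧ (∀ x : ℝ, x ∈ Set.Icc a 1 → (x : ℂ) ∈ U) ∧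
      ∀ {V : Type*} [Fintype V] [DecidableEq V] (E : Multiset (V × V)) (lam : V → ℂ),
        (∀ v, lam v ∈ U) → (∀ v, Incident E v → HasRatioIn β γ E lam v K) ∧
          partitionOn β γ E lam Finset.univ ≠ 0 := by
  have hI : IsCompact (Complex.ofReal '' Set.Icc a 1) :=
    isCompact_Icc.image Complex.continuous_ofReal
  obtain ⟨δ, hδ, s, hs, hsδ⟩ := h.exists_rescaled hβ hI hK isOpen_interior
  obtain ⟨M, h0, hMδ, hM⟩ := exists_submonoid_subset_thickening ha ha0 hδ
  have hMs := hsδ.mono hMδ interior_subset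
  have hs0 : 0 < s := by linarith
  have hs1 : s⁻¹ < 1 := inv_lt_one_of_one_lt₀ hs
  have mem_nhds (x : ℝ) (hx : x ∈ Set.Icc a 1) : (M : Set ℂ) ∈ 𝓝 ((x : ℂ) * (s : ℂ)⁻¹) := by
    have hsi : 0 < s⁻¹ := inv_pos.2 hs0
    exact_mod_cast hM (x * s⁻¹) (by nlinarith [hx.1]) (by nlinarith [hx.2])
  refine ⟨{z | z * (s : ℂ)⁻¹ ∈ interior (M : Set ℂ) ∧ 1 + z ≠ 0}, ?_, fun x hx => ⟨?_, ?_⟩,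
    fun E lam hlam => ?_⟩
  · exact (isOpen_interior.preimage (by fun_prop)).inter
      (isOpen_compl_singleton.preimage (by fun_prop : Continuous fun z : ℂ => 1 + z))
  · exact mem_interior_iff_mem_nhds.2 (mem_nhds x hx)
  · exact h.one_add_ne_zero _ (.inl ⟨x, hx, rfl⟩)
  · have inv_mem : (s : ℂ)⁻¹ ∈ M := by
      simpa using mem_of_mem_nhds (mem_nhds 1 ⟨by linarith, le_rfl⟩)
    have admissible := isAdmissible_rescaledField (E := E)
      (fun w hw => hMs.one_add_ne_zero w (.inl hw)) inv_mem
      fun v => ⟨interior_subset (hlam v).1, (hlam v).2⟩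
    obtain ⟨ne_zero, ratio⟩ := hMs.ratiosIn h0 E _ admissible
    refine ⟨fun v hv => (ratio v hv).of_rescaledField hs0.ne', ?_⟩
    rw [partitionOn_eq_rescaled hs0.ne']
    exact mul_ne_zero (pow_ne_zero _ (mod_cast hs0.ne')) ne_zero

end RescaledFields

section MultiGraph

variable {β γ : ℝ} {G : MultiGraph} {lam : Fin G.n → ℂ}

theorem ZC_eq_partitionOn : ZC β γ G lam = partitionOn β γ G.edges lam Finset.univ := rfl

theorem ZCv_eq_partitionAt (v : Fin G.n) (i : Bool) :
    ZCv β γ G lam v i = partitionAt β γ G.edges lam v i :=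
  (Finset.sum_filter ..).symm

end MultiGraph

/-- For `β > 1`, `γ < 0`, `β + γ > 2 − g(β)`, there exist an open neighborhood `U`
of the real interval `[γ/β, 1]` and a closed disk `K` in `ℂ` such that for every
graph `G` and every external field with values in `U`:
(1) for every non-isolated vertex `v`, `[Z_{G,v}(λ)]₀ ≠ 0` and `R_{G,v}(λ) ∈ K`;
(2) the partition function `Z_G(λ)` is nonzero. -/
theorem stmt16 (β γ : ℝ) (hβ : 1 < β) (hγ : γ < 0) (h : β + γ > 2 - gFun β) :
    ∃ U : Set ℂ, IsOpen U ∧ (∀ x : ℝ, x ∈ Set.Icc (γ / β) 1 → (x : ℂ) ∈ U) ∧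
      ∃ (c : ℂ) (ρ : ℝ),
        ∀ (G : MultiGraph) (lam : Fin G.n → ℂ), (∀ v, lam v ∈ U) →
          (∀ v : Fin G.n, (∃ e ∈ G.edges, e.1 = v ∨ e.2 = v) →
            ZCv β γ G lam v false ≠ 0 ∧
            ZCv β γ G lam v true / ZCv β γ G lam v false ∈ Metric.closedBall c ρ) ∧
          ZC β γ G lam ≠ 0 := by
  obtain ⟨α, b, hK⟩ := exists_isContractingDisk hβ hγ h
  have hβ0 : 0 < β := by linarith
  obtain ⟨U, hU, hIU, zero_free⟩ := hK.edgeMapsTo.exists_isOpen_hasRatioIn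
    (isCompact_closedBall _ _) hβ0.ne' (by linarith [hK.neg_lt_div, hK.alpha_lt_one])
    (div_neg_of_neg_of_pos hγ hβ0)
  refine ⟨U, hU, hIU, ((-α + b) / 2 : ℝ), (b - -α) / 2, fun G lam hlam => ?_⟩
  simp only [ZC_eq_partitionOn, ZCv_eq_partitionAt]
  exact zero_free G.edges lam hlam
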